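/- arXiv:1111.3602 — 3 statements merged into one kernel-verified Lean document; each statement's English description precedes it below -/
import Mathlib

section
/- Let N = p·q with p and q distinct odd primes, let ψ₁, ψ₂ be CRT idempotents for N, and let a₁, a₂, b₁, b₂ be integers coprime to N such that a₁ is a quadratic residue modulo p, a₂ is a quadratic non-residue modulo p, b₁ is a quadratic residue modulo q, and b₂ is a quadratic non-residue modulo q. Then for every unit z of ℤ/Nℤ and every unit r of ℤ/Nℤ there exist i, j ∈ {1,2} and an element x of ℤ/Nℤ such that x² = r²·(aᵢψ₁ + bⱼψ₂)·z in ℤ/Nℤ; that is, the padding set 𝔘 = { rᵢⱼ²(aᵢψ₁ + bⱼψ₂) } always contains a multiplier making x² = 𝔲·z solvable. -/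
/-!
By the Chinese remainder theorem, `x² = r²(aψ₁ + bψ₂)z` holds in `ℤ/pqℤ` exactly when it holds
modulo `p`, where it reads `x² = r²az`, and modulo `q`, where it reads `x² = r²bz`. In a finite
field the product of two non-squares is a square, so `z` times the residue or `z` times the
non-residue is a square (`exists_isSquare_mul`); the choices of `a` and `b` are independent.
-/

/-- Whatever the quadratic character of `c`, multiplying by a square `a₁` or by a non-square `a₂`
turns it into a square. -/
lemma exists_isSquare_mul {p : ℕ} [Fact p.Prime] {a₁ a₂ : ℤ} (h₁ : IsSquare (a₁ : ZMod p))
    (h₂ : ¬ IsSquare (a₂ : ZMod p)) (c : ZMod p) :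
    ∃ a ∈ ({a₁, a₂} : Set ℤ), IsSquare ((a : ZMod p) * c) := by
  by_cases hc : IsSquare c
  · exact ⟨a₁, by simp, h₁.mul hc⟩
  · refine ⟨a₂, by simp, ?_⟩
    have ha0 : (a₂ : ZMod p) ≠ 0 := fun h => h₂ (h ▸ IsSquare.zero)
    have hc0 : c ≠ 0 := fun h => hc (h ▸ IsSquare.zero)
    rw [← quadraticChar_one_iff_isSquare (mul_ne_zero ha0 hc0), map_mul,
      quadraticChar_neg_one_iff_not_isSquare.mpr h₂,
      quadraticChar_neg_one_iff_not_isSquare.mpr hc]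
    norm_num

/-- Same setting as before, but with the multipliers additionally scaled by the square of
an arbitrary unit `r`: for every unit `z` and every unit `r` of `ℤ/Nℤ`, some
`r²(aᵢψ₁ + bⱼψ₂)` makes `x² = r²(aᵢψ₁ + bⱼψ₂)·z` solvable. -/
theorem padding_set_randomized_solvable (p q : ℕ) (hp : p.Prime) (hq : q.Prime) (hpq : p ≠ q)
    (hp2 : p ≠ 2) (hq2 : q ≠ 2)
    (ψ₁ ψ₂ : ZMod (p * q)) (hsum : ψ₁ + ψ₂ = 1)
    (hψ₁ : ZMod.castHom (dvd_mul_left q p) (ZMod q) ψ₁ = 0)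
    (hψ₂ : ZMod.castHom (dvd_mul_right p q) (ZMod p) ψ₂ = 0)
    (a₁ a₂ b₁ b₂ : ℤ)
    (ha₁N : IsCoprime a₁ (p * q : ℤ)) (ha₂N : IsCoprime a₂ (p * q : ℤ))
    (hb₁N : IsCoprime b₁ (p * q : ℤ)) (hb₂N : IsCoprime b₂ (p * q : ℤ))
    (ha₁ : (a₁ : ZMod p) ≠ 0 ∧ IsSquare (a₁ : ZMod p))
    (ha₂ : ¬ IsSquare (a₂ : ZMod p))
    (hb₁ : (b₁ : ZMod q) ≠ 0 ∧ IsSquare (b₁ : ZMod q))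
    (hb₂ : ¬ IsSquare (b₂ : ZMod q)) :
    ∀ z r : (ZMod (p * q))ˣ,
      ∃ a ∈ ({a₁, a₂} : Set ℤ), ∃ b ∈ ({b₁, b₂} : Set ℤ),
        ∃ x : ZMod (p * q),
          x ^ 2 = (r : ZMod (p * q)) ^ 2 *
            ((a : ZMod (p * q)) * ψ₁ + (b : ZMod (p * q)) * ψ₂) * z := by
  intro z r
  haveI := Fact.mk hp
  haveI := Fact.mk hq
  set f := ZMod.castHom (dvd_mul_right p q) (ZMod p)
  set g := ZMod.castHom (dvd_mul_left q p) (ZMod q)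
  obtain ⟨a, ha, y, hy⟩ := exists_isSquare_mul ha₁.2 ha₂ (f z)
  obtain ⟨b, hb, w, hw⟩ := exists_isSquare_mul hb₁.2 hb₂ (g z)
  have hf₁ : f ψ₁ = 1 := by simpa [hψ₂] using congrArg f hsum
  have hg₂ : g ψ₂ = 1 := by simpa [hψ₁] using congrArg g hsum
  let e := ZMod.chineseRemainder ((Nat.coprime_primes hp hq).mpr hpq)
  -- Ring homomorphisms out of `ZMod n` are unique, so the components of `e` are `f` and `g`.
  have hef (t : ZMod (p * q)) : (e t).1 = f t :=
    RingHom.congr_fun (Subsingleton.elim ((RingHom.fst _ _).comp e.toRingHom) f) t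
  have heg (t : ZMod (p * q)) : (e t).2 = g t :=
    RingHom.congr_fun (Subsingleton.elim ((RingHom.snd _ _).comp e.toRingHom) g) t
  refine ⟨a, ha, b, hb, e.symm (f r * y, g r * w), e.injective (Prod.ext ?_ ?_)⟩
  · rw [map_pow, e.apply_symm_apply, hef]
    simp only [map_mul, map_add, map_pow, map_intCast, hf₁, hψ₂, Prod.pow_fst]
    linear_combination -(f r) ^ 2 * hy
  · rw [map_pow, e.apply_symm_apply, heg]
    simp only [map_mul, map_add, map_pow, map_intCast, hg₂, hψ₁, Prod.pow_snd]
    linear_combination -(g r) ^ 2 * hw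
end

section
/- Let N = p·q where p and q are distinct Blum primes (primes congruent to 3 modulo 4), let a be a unit of ℤ/Nℤ that is a square in ℤ/Nℤ, and let c be any unit of ℤ/Nℤ. Then there exists an element S of ℤ/Nℤ with S² = a such that c·S is a square in ℤ/Nℤ, i.e., there exists T in ℤ/Nℤ with T² = c·S. -/
/-!
By the Chinese remainder theorem `ℤ/Nℤ` is the product of the fields `ℤ/pℤ` and `ℤ/qℤ`. In each
of these fields `-1` is a nonsquare, so for every `x` one of `x` and `-x` is a square. Starting
from any square root of `a`, the sign of each of its two components can therefore be chosen
independently so that the product with the corresponding component of `c` becomes a square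
(`blum_local`).
-/

/-- Modulo a Blum prime, every element is a square up to sign. -/
lemma blum_isSquare_or_neg (p : ℕ) (hp : p.Prime) (hp4 : p % 4 = 3) (x : ZMod p) :
    IsSquare x ∨ IsSquare (-x) := by
  haveI : Fact p.Prime := ⟨hp⟩
  by_contra! h
  obtain ⟨h1, h2⟩ := h
  have h3 : ¬ IsSquare (-1 : ZMod p) := fun h => ZMod.exists_sq_eq_neg_one_iff.mp h hp4
  rw [← quadraticChar_neg_one_iff_not_isSquare] at h1 h2 h3
  rw [neg_eq_neg_one_mul, map_mul, h1, h3] at h2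
  norm_num at h2

/-- The sign of a square root `r` can be chosen modulo a Blum prime so that its product with `c`
is a square. -/
lemma blum_local (p : ℕ) (hp : p.Prime) (hp4 : p % 4 = 3) (r c : ZMod p) :
    ∃ s t : ZMod p, s ^ 2 = r ^ 2 ∧ t ^ 2 = c * s := by
  rcases blum_isSquare_or_neg p hp hp4 (c * r) with ⟨t, ht⟩ | ⟨t, ht⟩
  · exact ⟨r, t, rfl, by rw [ht, sq]⟩
  · exact ⟨-r, t, neg_sq r, by rw [mul_neg, ht, sq]⟩

/-- For `N = p * q` a product of distinct Blum primes, `a` a unit square in `ℤ/Nℤ` and `c`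
any unit of `ℤ/Nℤ`, there is a square root `S` of `a` such that `c·S` is again a square. -/
theorem blum_root_with_square_multiple (p q : ℕ) (hp : p.Prime) (hq : q.Prime)
    (hpq : p ≠ q) (hp4 : p % 4 = 3) (hq4 : q % 4 = 3)
    (a : (ZMod (p * q))ˣ) (ha : IsSquare (a : ZMod (p * q)))
    (c : (ZMod (p * q))ˣ) :
    ∃ S : ZMod (p * q), S ^ 2 = (a : ZMod (p * q)) ∧
      ∃ T : ZMod (p * q), T ^ 2 = (c : ZMod (p * q)) * S := by
  obtain ⟨r, hr⟩ := ha
  let f := ZMod.chineseRemainder ((Nat.coprime_primes hp hq).mpr hpq)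
  obtain ⟨s₁, t₁, hs₁, ht₁⟩ := blum_local p hp hp4 (f r).1 (f c).1
  obtain ⟨s₂, t₂, hs₂, ht₂⟩ := blum_local q hq hq4 (f r).2 (f c).2
  refine ⟨f.symm (s₁, s₂), f.injective ?_, f.symm (t₁, t₂), f.injective ?_⟩
  · rw [hr, ← sq, map_pow, map_pow, f.apply_symm_apply]
    exact Prod.ext hs₁ hs₂
  · rw [map_pow, map_mul, f.apply_symm_apply, f.apply_symm_apply]
    exact Prod.ext ht₁ ht₂
end

section
/- (Signability in Variant I.) Let N = p·q where p and q are distinct Blum primes (primes congruent to 3 modulo 4), let ψ₁, ψ₂ be CRT idempotents for N, and let m be an integer coprime to N. Set U = (m|p)·ψ₁ + (m|q)·ψ₂ in ℤ/Nℤ, where (m|p) and (m|q) are the Legendre symbols of m modulo p and q. Then there exist elements S and T of ℤ/Nℤ such that S² = m·U and T² = (U + 1)·S in ℤ/Nℤ. -/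
/-!
By the Chinese remainder theorem it suffices to solve both equations modulo each of the two
primes, where `U` becomes the Legendre symbol `L` of `m`. Modulo a Blum prime `-1` is not a
square, so one of `x`, `-x` is a square for every `x` (`isSquare_or_isSquare_neg`). If `L = 1`,
then `m = a²`, and the sign of `S = ±a` can be chosen so that `2S` is a square. If `L = -1`, then
`-m` is a square and `T = 0` works, since `U + 1 = 0`.
-/

lemma isSquare_or_isSquare_neg (p : ℕ) [Fact p.Prime] (hp4 : p % 4 = 3) (x : ZMod p) :
    IsSquare x ∨ IsSquare (-x) := by
  by_cases hx : x = 0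
  · exact Or.inl (by simp [hx])
  have hneg : quadraticChar (ZMod p) (-1) = -1 := by
    rw [quadraticChar_neg_one_iff_not_isSquare, ZMod.exists_sq_eq_neg_one_iff]
    exact fun h => h hp4
  rcases quadraticChar_dichotomy hx with h | h
  · exact Or.inl ((quadraticChar_one_iff_isSquare hx).1 h)
  · refine Or.inr ((quadraticChar_one_iff_isSquare (neg_ne_zero.2 hx)).1 ?_)
    rw [← neg_one_mul, map_mul, hneg, h]
    norm_num

/-- Signability modulo a single Blum prime. -/
lemma signable_mod_prime (p : ℕ) [Fact p.Prime] (hp4 : p % 4 = 3) (m : ℤ) :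
    ∃ s t : ZMod p, s ^ 2 = (m : ZMod p) * (legendreSym p m : ZMod p) ∧
      t ^ 2 = ((legendreSym p m : ZMod p) + 1) * s := by
  by_cases hm : (m : ZMod p) = 0
  · exact ⟨0, 0, by simp [hm], by simp⟩
  rcases legendreSym.eq_one_or_neg_one p hm with h | h
  · obtain ⟨a, ha⟩ := (legendreSym.eq_one_iff p hm).1 h
    rcases isSquare_or_isSquare_neg p hp4 (2 * a) with ⟨t, ht⟩ | ⟨t, ht⟩
    · refine ⟨a, t, ?_, ?_⟩ <;> rw [h] <;> push_cast
      · rw [ha]; ring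
      · linear_combination -ht
    · refine ⟨-a, t, ?_, ?_⟩ <;> rw [h] <;> push_cast
      · rw [ha]; ring
      · linear_combination -ht
  · have hns := (legendreSym.eq_neg_one_iff p).1 h
    obtain ⟨s, hs⟩ := (isSquare_or_isSquare_neg p hp4 (m : ZMod p)).resolve_left hns
    refine ⟨s, 0, ?_, ?_⟩ <;> rw [h] <;> push_cast
    · linear_combination -hs
    · ring

/-- Signability in Variant I: for `N = p * q` a product of distinct Blum primes, CRT
idempotents `ψ₁, ψ₂`, `m` coprime to `N` and `U = (m|p)ψ₁ + (m|q)ψ₂`, there exist `S, T`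
with `S² = m·U` and `T² = (U + 1)·S`. -/
theorem variantI_signable (p q : ℕ) [Fact p.Prime] [Fact q.Prime]
    (hpq : p ≠ q) (hp4 : p % 4 = 3) (hq4 : q % 4 = 3)
    (ψ₁ ψ₂ : ZMod (p * q)) (hsum : ψ₁ + ψ₂ = 1)
    (hψ₁ : ZMod.castHom (dvd_mul_left q p) (ZMod q) ψ₁ = 0)
    (hψ₂ : ZMod.castHom (dvd_mul_right p q) (ZMod p) ψ₂ = 0)
    (m : ℤ) (hm : IsCoprime m (p * q : ℤ)) :
    ∃ S T : ZMod (p * q),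
      S ^ 2 = (m : ZMod (p * q)) *
        ((legendreSym p m : ZMod (p * q)) * ψ₁ + (legendreSym q m : ZMod (p * q)) * ψ₂) ∧
      T ^ 2 = (((legendreSym p m : ZMod (p * q)) * ψ₁ +
        (legendreSym q m : ZMod (p * q)) * ψ₂) + 1) * S := by
  have hcop : Nat.Coprime p q := (Nat.coprime_primes Fact.out Fact.out).2 hpq
  let e := ZMod.chineseRemainder hcop
  -- ring homomorphisms out of `ZMod (p * q)` are unique, so the components of `e` are the casts
  have e₁ : (RingHom.fst _ _).comp e.toRingHom = ZMod.castHom (dvd_mul_right p q) (ZMod p) :=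
    Subsingleton.elim _ _
  have e₂ : (RingHom.snd _ _).comp e.toRingHom = ZMod.castHom (dvd_mul_left q p) (ZMod q) :=
    Subsingleton.elim _ _
  have h21 : (e ψ₂).1 = 0 := (DFunLike.congr_fun e₁ ψ₂).trans hψ₂
  have h12 : (e ψ₁).2 = 0 := (DFunLike.congr_fun e₂ ψ₁).trans hψ₁
  have hs : e ψ₁ + e ψ₂ = 1 := by rw [← map_add, hsum, map_one]
  have h11 : (e ψ₁).1 = 1 := by simpa [h21] using congrArg Prod.fst hs
  have h22 : (e ψ₂).2 = 1 := by simpa [h12] using congrArg Prod.snd hs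
  obtain ⟨s, t, hs1, ht1⟩ := signable_mod_prime p hp4 m
  obtain ⟨s', t', hs2, ht2⟩ := signable_mod_prime q hq4 m
  refine ⟨e.symm (s, s'), e.symm (t, t'), e.injective ?_, e.injective ?_⟩
  · ext <;> simp [h11, h12, h21, h22, hs1, hs2]
  · ext <;> simp [h11, h12, h21, h22, ht1, ht2]
end
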